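/- arXiv:2211.14374 — 2 statements merged into one kernel-verified Lean document; each statement's English description precedes it below -/
import Mathlib

section
/- Let M be a log-convex weight sequence. Then the associated weight of v_M coincides with v_M, i.e. w̃_{v_M}(z) = exp(ω_M(|z|)) for all z ∈ ℂ, so ṽ_M = v_M; in particular the weight v_M is essential. -/
open Filter Set

/-- The associated weight function `ω_M(t) = sup_j log(t^j / M_j)` for `t ≠ 0`, `ω_M(0) = 0`. -/
noncomputable def omegaM (M : ℕ → ℝ) (t : ℝ) : ℝ :=
  if t = 0 then 0 else ⨆ j : ℕ, Real.log (t ^ j / M j)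

/-- `v_M(t) = exp(-ω_M(t))`. -/
noncomputable def vM (M : ℕ → ℝ) (t : ℝ) : ℝ :=
  Real.exp (-(omegaM M t))

/-- `v_{M,c}(t) = exp(-ω_M(c·t))`. -/
noncomputable def vMc (M : ℕ → ℝ) (c t : ℝ) : ℝ :=
  Real.exp (-(omegaM M (c * t)))

/-- `v_M^c(t) = exp(-c·ω_M(t))`. -/
noncomputable def vMpow (M : ℕ → ℝ) (c t : ℝ) : ℝ :=
  Real.exp (-(c * omegaM M t))

/-- A weight sequence: positive, `M_0 = 1`, `(M_j)^{1/j} → ∞`. -/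
def WeightSeq (M : ℕ → ℝ) : Prop :=
  (∀ j, 0 < M j) ∧ M 0 = 1 ∧
    Tendsto (fun j : ℕ => (M j) ^ (1 / (j : ℝ))) atTop atTop

/-- Log-convexity: `M_j² ≤ M_{j-1}·M_{j+1}` for `j ≥ 1`. -/
def LogConvexSeq (M : ℕ → ℝ) : Prop :=
  ∀ j : ℕ, 1 ≤ j → (M j) ^ 2 ≤ M (j - 1) * M (j + 1)

/-- The class `LC`: normalized log-convex weight sequences. -/
def LCset (M : ℕ → ℝ) : Prop :=
  WeightSeq M ∧ LogConvexSeq M ∧ 1 ≤ M 1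

/-- Weighted space of entire functions with `sup |f(z)|·v(|z|) < ∞`. -/
def Hinf (v : ℝ → ℝ) : Set (ℂ → ℂ) :=
  {f | Differentiable ℂ f ∧
    ∃ C : ℝ, ∀ z : ℂ, ‖f z‖ * v ‖z‖ ≤ C}

/-- The weighted sup-norm `‖f‖_v`. -/
noncomputable def wnorm (v : ℝ → ℝ) (f : ℂ → ℂ) : ℝ :=
  ⨆ z : ℂ, ‖f z‖ * v ‖z‖

/-- A weight: strictly positive, continuous, non-increasing and rapidly
decreasing on `[0,∞)`. -/
def IsWeight (v : ℝ → ℝ) : Prop :=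
  (∀ t : ℝ, 0 ≤ t → 0 < v t) ∧ ContinuousOn v (Set.Ici 0) ∧
    AntitoneOn v (Set.Ici 0) ∧
    ∀ k : ℕ, Tendsto (fun t : ℝ => t ^ k * v t) atTop (nhds 0)

/-- A normalized weight: `v ≡ 1` on `[0,1]`. -/
def NormalizedWeight (v : ℝ → ℝ) : Prop :=
  ∀ t : ℝ, 0 ≤ t → t ≤ 1 → v t = 1

/-- A (log-)convex weight: `t ↦ -log v(eᵗ)` is convex on `ℝ`. -/
def ConvexWeight (v : ℝ → ℝ) : Prop :=
  ConvexOn ℝ Set.univ fun t : ℝ => -Real.log (v (Real.exp t))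

/-- Moderate growth for a weight: `v(H·t) ≤ e^H · v(t)²`. -/
def ModerateGrowthW (v : ℝ → ℝ) : Prop :=
  ∃ H : ℝ, 1 ≤ H ∧ ∀ t : ℝ, 0 ≤ t → v (H * t) ≤ Real.exp H * (v t) ^ 2

/-- Moderate growth (mg) for a sequence: `M_{j+k} ≤ C^{j+k}·M_j·M_k`. -/
def MGseq (M : ℕ → ℝ) : Prop :=
  ∃ C : ℝ, 1 ≤ C ∧ ∀ j k : ℕ, M (j + k) ≤ C ^ (j + k) * M j * M k

/-- The associated weight sequence `M^v_j = sup_{t>0} t^j·v(t)`. -/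
noncomputable def assocSeq (v : ℝ → ℝ) (j : ℕ) : ℝ :=
  ⨆ t : Set.Ioi (0 : ℝ), (t : ℝ) ^ j * v t

/-- The unit ball `B_{1/v}(ℂ)` of entire functions bounded by `1/v`. -/
def BClass (v : ℝ → ℝ) : Set (ℂ → ℂ) :=
  {f | Differentiable ℂ f ∧ ∀ z : ℂ, ‖f z‖ ≤ 1 / v ‖z‖}

/-- The associated growth condition `w̃_v(z) = sup{|f(z)| : f ∈ B_{1/v}}`. -/
noncomputable def wTilde (v : ℝ → ℝ) (z : ℂ) : ℝ :=
  sSup {x : ℝ | ∃ f ∈ BClass v, x = ‖f z‖}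

/-- The associated weight `ṽ = 1/w̃_v`, as a function of `t = |z|`. -/
noncomputable def vTilde (v : ℝ → ℝ) (t : ℝ) : ℝ :=
  1 / wTilde v (t : ℂ)

/-- An essential weight: `v ∼ ṽ`. -/
def Essential (v : ℝ → ℝ) : Prop :=
  ∃ C : ℝ, 1 ≤ C ∧ ∀ t : ℝ, 0 ≤ t →
    v t ≤ C * vTilde v t ∧ vTilde v t ≤ C * v t

/-- `P_v(t) = sup_j t^j/‖z^j‖_v`. -/
noncomputable def Pfun (v : ℝ → ℝ) (t : ℝ) : ℝ :=
  ⨆ j : ℕ, t ^ j / wnorm v fun z : ℂ => z ^ j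

/-- The convolved sequence `(M⋆N)_j = min_{0≤k≤j} M_k·N_{j-k}`. -/
noncomputable def convSeq (M N : ℕ → ℝ) (j : ℕ) : ℝ :=
  (Finset.range (j + 1)).inf' Finset.nonempty_range_add_one fun k => M k * N (j - k)

/-!
Every function in the ball `B_{1/v}(ℂ)` is bounded by `1/v` by definition, so `w̃_v = 1/v` as soon
as `1/v(|z|)` is the pointwise supremum of the moduli of some family of entire functions. For
`v = v_M` the monomials `z ^ j / M_j` are such a family; the growth `(M_j)^{1/j} → ∞` makes the
supremum defining `ω_M` finite.
-/

section AssociatedWeight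

variable {v : ℝ → ℝ}

theorem wTilde_eq_one_div_of_isLUB {ι : Type*} {f : ι → ℂ → ℂ}
    (hf : ∀ i, Differentiable ℂ (f i))
    (hlub : ∀ z, IsLUB (range fun i => ‖f i z‖) (1 / v ‖z‖)) (z : ℂ) :
    wTilde v z = 1 / v ‖z‖ := by
  have hmem (i : ι) : f i ∈ BClass v := ⟨hf i, fun w => (hlub w).1 (mem_range_self i)⟩
  have hball : IsLUB {x : ℝ | ∃ g ∈ BClass v, x = ‖g z‖} (1 / v ‖z‖) := by
    refine ⟨?_, fun b hb => (hlub z).2 ?_⟩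
    · rintro _ ⟨g, hg, rfl⟩
      exact hg.2 z
    · rintro _ ⟨i, rfl⟩
      exact hb ⟨f i, hmem i, rfl⟩
  exact hball.csSup_eq hball.nonempty

theorem vTilde_eq_self_of_wTilde_eq_one_div (hw : ∀ z, wTilde v z = 1 / v ‖z‖) {t : ℝ}
    (ht : 0 ≤ t) : vTilde v t = v t := by
  rw [vTilde, hw, Complex.norm_of_nonneg ht, one_div_one_div]

theorem essential_of_vTilde_eq_self (hv : ∀ t, 0 ≤ t → vTilde v t = v t) : Essential v :=
  ⟨1, le_rfl, fun t ht => by simp only [hv t ht, one_mul, le_refl, and_self]⟩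

end AssociatedWeight

section WeightSequence

variable {M : ℕ → ℝ} {t : ℝ}

theorem eventually_pow_le_of_tendsto_rpow_one_div (hM : ∀ j, 0 ≤ M j)
    (hlim : Tendsto (fun j : ℕ => M j ^ (1 / (j : ℝ))) atTop atTop) (ht : 0 ≤ t) :
    ∀ᶠ j in atTop, t ^ j ≤ M j := by
  filter_upwards [hlim.eventually_ge_atTop t, eventually_ne_atTop 0] with j hroot hj
  calc t ^ j ≤ (M j ^ (1 / (j : ℝ))) ^ j := by gcongr
    _ = M j := by rw [one_div, Real.rpow_inv_natCast_pow (hM j) hj]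

theorem WeightSeq.bddAbove_range_log_pow_div (hM : WeightSeq M) (ht : 0 ≤ t) :
    BddAbove (range fun j : ℕ => Real.log (t ^ j / M j)) := by
  obtain ⟨hpos, -, hlim⟩ := hM
  have hle : ∀ᶠ j in atTop, Real.log (t ^ j / M j) ≤ 0 := by
    filter_upwards [eventually_pow_le_of_tendsto_rpow_one_div (fun j => (hpos j).le) hlim ht]
      with j hj
    exact Real.log_nonpos (div_nonneg (pow_nonneg ht j) (hpos j).le)
      (div_le_one_of_le₀ hj (hpos j).le)
  exact (isBoundedUnder_of_eventually_le hle).bddAbove_range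

theorem isLUB_pow_div_zero (hM₀ : M 0 = 1) :
    IsLUB (range fun j : ℕ => (0 : ℝ) ^ j / M j) 1 := by
  refine IsGreatest.isLUB ⟨⟨0, by simp [hM₀]⟩, ?_⟩
  rintro _ ⟨_ | j, rfl⟩ <;> simp [hM₀]

theorem WeightSeq.isLUB_pow_div (hM : WeightSeq M) (ht : 0 ≤ t) :
    IsLUB (range fun j : ℕ => t ^ j / M j) (Real.exp (omegaM M t)) := by
  rcases ht.eq_or_lt with rfl | ht
  · simpa only [omegaM, if_true, Real.exp_zero] using isLUB_pow_div_zero hM.2.1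
  · have hpos (j : ℕ) : 0 < t ^ j / M j := div_pos (pow_pos ht j) (hM.1 j)
    rw [omegaM, if_neg ht.ne']
    refine ⟨?_, fun b hb => ?_⟩
    · rintro _ ⟨j, rfl⟩
      exact (Real.log_le_iff_le_exp (hpos j)).1 (le_ciSup (hM.bddAbove_range_log_pow_div ht.le) j)
    · have hle (j : ℕ) : t ^ j / M j ≤ b := hb (mem_range_self j)
      rw [← Real.le_log_iff_exp_le ((hpos 0).trans_le (hle 0))]
      exact ciSup_le fun j => Real.log_le_log (hpos j) (hle j)

theorem one_div_vM : 1 / vM M t = Real.exp (omegaM M t) := by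
  rw [vM, Real.exp_neg, one_div, inv_inv]

theorem WeightSeq.wTilde_vM (hM : WeightSeq M) (z : ℂ) :
    wTilde (vM M) z = 1 / vM M ‖z‖ := by
  refine wTilde_eq_one_div_of_isLUB (f := fun (j : ℕ) w => w ^ j / (M j : ℂ))
    (fun j => by fun_prop) (fun w => ?_) z
  have hnorm (j : ℕ) : ‖w ^ j / (M j : ℂ)‖ = ‖w‖ ^ j / M j := by
    rw [norm_div, norm_pow, Complex.norm_of_nonneg (hM.1 j).le]
  simpa only [hnorm, one_div_vM] using hM.isLUB_pow_div (norm_nonneg w)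

end WeightSequence

theorem stmt4_general (M : ℕ → ℝ) (hM : WeightSeq M) :
    (∀ z : ℂ, wTilde (vM M) z = Real.exp (omegaM M ‖z‖)) ∧
    (∀ t : ℝ, 0 ≤ t → vTilde (vM M) t = vM M t) ∧
    Essential (vM M) := by
  have hv : ∀ t, 0 ≤ t → vTilde (vM M) t = vM M t := fun _ ht =>
    vTilde_eq_self_of_wTilde_eq_one_div hM.wTilde_vM ht
  exact ⟨fun z => (hM.wTilde_vM z).trans one_div_vM, hv, essential_of_vTilde_eq_self hv⟩

/-- Theorem: for a log-convex weight sequence `M`, the associated weight of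
`v_M` coincides with `v_M`: `w̃_{v_M}(z) = exp(ω_M(|z|))`, so `ṽ_M = v_M` and
`v_M` is essential. -/
theorem stmt4 (M : ℕ → ℝ) (hM : WeightSeq M) (hMlc : LogConvexSeq M) :
    (∀ z : ℂ, wTilde (vM M) z = Real.exp (omegaM M ‖z‖)) ∧
    (∀ t : ℝ, 0 ≤ t → vTilde (vM M) t = vM M t) ∧
    Essential (vM M) :=
  stmt4_general M hM
end

section
/- Let M be a log-convex weight sequence with moderate growth (mg). Then there exists H ≥ 1 such that for all c₁, c₂ > 0 and all f ∈ H^∞_{v_{M,c₁}}(ℂ) and g ∈ H^∞_{v_{M,c₂}}(ℂ), the pointwise product f·g belongs to H^∞_{v_{M,H·max(c₁,c₂)}}(ℂ). Consequently, both ⋃_{c>0} H^∞_{v_{M,c}}(ℂ) and ⋂_{c>0} H^∞_{v_{M,c}}(ℂ) are closed under pointwise multiplication. -/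
open Filter Set

/-! By moderate growth, `(t ^ j / M j) * (t ^ k / M k) ≤ (C t) ^ (j + k) / M (j + k)`, so taking
suprema over `j` and `k` gives `2 ω_M(t) ≤ ω_M(C t)`. As `ω_M` is nondecreasing, the weight
`v_{M, C max(c₁, c₂)}` is then dominated by the product `v_{M,c₁} v_{M,c₂}`, so `H = C` works.
The union is stable because the dilation by `C` is absorbed in `c`, the intersection because `c`
can be replaced by `c / C`. -/

theorem mul_mem_Hinf {u v w : ℝ → ℝ} (hu : ∀ t, 0 ≤ t → 0 ≤ u t) (hv : ∀ t, 0 ≤ t → 0 ≤ v t)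
    (hw : ∀ t, 0 ≤ t → w t ≤ u t * v t) {f g : ℂ → ℂ} (hf : f ∈ Hinf u) (hg : g ∈ Hinf v) :
    (fun z => f z * g z) ∈ Hinf w := by
  obtain ⟨hf_diff, A, hA⟩ := hf
  obtain ⟨hg_diff, B, hB⟩ := hg
  refine ⟨hf_diff.mul hg_diff, A * B, fun z => ?_⟩
  have hu_z : 0 ≤ u ‖z‖ := hu _ (norm_nonneg z)
  have hv_z : 0 ≤ v ‖z‖ := hv _ (norm_nonneg z)
  have hA_nonneg : 0 ≤ A := (mul_nonneg (norm_nonneg _) hu_z).trans (hA z)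
  calc
    ‖f z * g z‖ * w ‖z‖ ≤ ‖f z * g z‖ * (u ‖z‖ * v ‖z‖) := by gcongr; exact hw _ (norm_nonneg z)
    _ = (‖f z‖ * u ‖z‖) * (‖g z‖ * v ‖z‖) := by rw [norm_mul, mul_mul_mul_comm]
    _ ≤ A * B := mul_le_mul (hA z) (hB z) (by positivity) hA_nonneg

namespace WeightSeq

variable {M : ℕ → ℝ}

theorem eventually_pow_le (hM : WeightSeq M) {t : ℝ} (ht : 0 ≤ t) :
    ∀ᶠ j in atTop, t ^ j ≤ M j := by
  obtain ⟨hpos, -, hlim⟩ := hM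
  filter_upwards [hlim.eventually_ge_atTop t, eventually_ne_atTop 0] with j htj hj
  calc
    t ^ j ≤ (M j ^ (1 / (j : ℝ))) ^ j := by gcongr
    _ = M j := by rw [one_div, Real.rpow_inv_natCast_pow (hpos j).le hj]

theorem bddAbove_range_log_pow_div_s17 (hM : WeightSeq M) {t : ℝ} (ht : 0 ≤ t) :
    BddAbove (range fun j => Real.log (t ^ j / M j)) := by
  refine IsBoundedUnder.bddAbove_range ⟨0, eventually_map.2 ?_⟩
  filter_upwards [hM.eventually_pow_le ht] with j hj
  have hMj : 0 < M j := hM.1 j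
  exact Real.log_nonpos (by positivity) ((div_le_one hMj).2 hj)

theorem log_pow_div_le_omegaM (hM : WeightSeq M) {t : ℝ} (ht : 0 < t) (j : ℕ) :
    Real.log (t ^ j / M j) ≤ omegaM M t := by
  rw [omegaM, if_neg ht.ne']
  exact le_ciSup (hM.bddAbove_range_log_pow_div_s17 ht.le) j

theorem omegaM_nonneg (hM : WeightSeq M) {t : ℝ} (ht : 0 ≤ t) : 0 ≤ omegaM M t := by
  rcases ht.eq_or_lt with rfl | ht
  · simp [omegaM]
  · simpa [hM.2.1] using hM.log_pow_div_le_omegaM ht 0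

theorem monotoneOn_omegaM (hM : WeightSeq M) : MonotoneOn (omegaM M) (Ici 0) := by
  intro s (hs : 0 ≤ s) t ht hst
  rcases hs.eq_or_lt with rfl | hs
  · simpa [omegaM] using hM.omegaM_nonneg ht
  rw [omegaM, if_neg hs.ne']
  refine ciSup_le fun j => ?_
  have hMj : 0 < M j := hM.1 j
  calc
    Real.log (s ^ j / M j) ≤ Real.log (t ^ j / M j) := by gcongr
    _ ≤ omegaM M t := hM.log_pow_div_le_omegaM (hs.trans_le hst) j

theorem two_mul_omegaM_le (hM : WeightSeq M) {C : ℝ} (hC : 0 < C)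
    (hmg : ∀ j k, M (j + k) ≤ C ^ (j + k) * M j * M k) {t : ℝ} (ht : 0 ≤ t) :
    2 * omegaM M t ≤ omegaM M (C * t) := by
  rcases ht.eq_or_lt with rfl | ht
  · simp [omegaM]
  rw [two_mul, omegaM, if_neg ht.ne']
  refine ciSup_add_ciSup_le fun j k => ?_
  have hMj : 0 < M j := hM.1 j
  have hMk : 0 < M k := hM.1 k
  have hMjk : 0 < M (j + k) := hM.1 (j + k)
  have hprod : t ^ j / M j * (t ^ k / M k) ≤ (C * t) ^ (j + k) / M (j + k) := by
    rw [div_mul_div_comm, div_le_div_iff₀ (by positivity) hMjk]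
    calc
      t ^ j * t ^ k * M (j + k) ≤ t ^ j * t ^ k * (C ^ (j + k) * M j * M k) := by
        gcongr
        exact hmg j k
      _ = (C * t) ^ (j + k) * (M j * M k) := by ring
  calc
    Real.log (t ^ j / M j) + Real.log (t ^ k / M k) = Real.log (t ^ j / M j * (t ^ k / M k)) :=
      (Real.log_mul (by positivity) (by positivity)).symm
    _ ≤ Real.log ((C * t) ^ (j + k) / M (j + k)) := Real.log_le_log (by positivity) hprod
    _ ≤ omegaM M (C * t) := hM.log_pow_div_le_omegaM (by positivity) (j + k)

theorem vMc_mul_max_le (hM : WeightSeq M) {C : ℝ} (hC : 0 < C)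
    (hmg : ∀ j k, M (j + k) ≤ C ^ (j + k) * M j * M k) {c₁ c₂ t : ℝ}
    (hc₁ : 0 ≤ c₁) (hc₂ : 0 ≤ c₂) (ht : 0 ≤ t) :
    vMc M (C * max c₁ c₂) t ≤ vMc M c₁ t * vMc M c₂ t := by
  have hmono {c : ℝ} (hc : 0 ≤ c) (hle : c ≤ max c₁ c₂) :
      omegaM M (c * t) ≤ omegaM M (max c₁ c₂ * t) :=
    hM.monotoneOn_omegaM (mul_nonneg hc ht) (mul_nonneg (hc.trans hle) ht) (by gcongr)
  have homega : omegaM M (c₁ * t) + omegaM M (c₂ * t) ≤ omegaM M (C * max c₁ c₂ * t) :=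
    calc
      omegaM M (c₁ * t) + omegaM M (c₂ * t) ≤ 2 * omegaM M (max c₁ c₂ * t) := by
        rw [two_mul]
        exact add_le_add (hmono hc₁ (le_max_left _ _)) (hmono hc₂ (le_max_right _ _))
      _ ≤ omegaM M (C * (max c₁ c₂ * t)) :=
        hM.two_mul_omegaM_le hC hmg (mul_nonneg (le_max_of_le_left hc₁) ht)
      _ = omegaM M (C * max c₁ c₂ * t) := by rw [mul_assoc]
  rw [vMc, vMc, vMc, ← Real.exp_add, ← neg_add]
  exact Real.exp_le_exp.2 (neg_le_neg homega)

theorem mul_mem_Hinf_vMc (hM : WeightSeq M) {C : ℝ} (hC : 0 < C)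
    (hmg : ∀ j k, M (j + k) ≤ C ^ (j + k) * M j * M k) {c₁ c₂ : ℝ}
    (hc₁ : 0 ≤ c₁) (hc₂ : 0 ≤ c₂) {f g : ℂ → ℂ}
    (hf : f ∈ Hinf (vMc M c₁)) (hg : g ∈ Hinf (vMc M c₂)) :
    (fun z => f z * g z) ∈ Hinf (vMc M (C * max c₁ c₂)) :=
  mul_mem_Hinf (fun _ _ => (Real.exp_pos _).le) (fun _ _ => (Real.exp_pos _).le)
    (fun _ ht => hM.vMc_mul_max_le hC hmg hc₁ hc₂ ht) hf hg

end WeightSeq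

theorem stmt17_general (M : ℕ → ℝ) (hM : WeightSeq M) (hmg : MGseq M) :
    (∃ H : ℝ, 1 ≤ H ∧ ∀ c₁ c₂ : ℝ, 0 < c₁ → 0 < c₂ →
      ∀ f g : ℂ → ℂ, f ∈ Hinf (vMc M c₁) → g ∈ Hinf (vMc M c₂) →
        (fun z : ℂ => f z * g z) ∈ Hinf (vMc M (H * max c₁ c₂))) ∧
    (∀ f g : ℂ → ℂ,
      f ∈ ⋃ c : {c : ℝ // 0 < c}, Hinf (vMc M c.1) →
      g ∈ ⋃ c : {c : ℝ // 0 < c}, Hinf (vMc M c.1) →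
      (fun z : ℂ => f z * g z) ∈ ⋃ c : {c : ℝ // 0 < c}, Hinf (vMc M c.1)) ∧
    (∀ f g : ℂ → ℂ,
      f ∈ ⋂ c : {c : ℝ // 0 < c}, Hinf (vMc M c.1) →
      g ∈ ⋂ c : {c : ℝ // 0 < c}, Hinf (vMc M c.1) →
      (fun z : ℂ => f z * g z) ∈ ⋂ c : {c : ℝ // 0 < c}, Hinf (vMc M c.1)) := by
  obtain ⟨C, hC_one, hmg⟩ := hmg
  have hC : 0 < C := one_pos.trans_le hC_one
  refine ⟨⟨C, hC_one, fun c₁ c₂ hc₁ hc₂ f g hf hg =>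
    hM.mul_mem_Hinf_vMc hC hmg hc₁.le hc₂.le hf hg⟩, fun f g hf hg => ?_, fun f g hf hg => ?_⟩
  · obtain ⟨⟨c₁, hc₁⟩, hf⟩ := mem_iUnion.1 hf
    obtain ⟨⟨c₂, hc₂⟩, hg⟩ := mem_iUnion.1 hg
    exact mem_iUnion.2 ⟨⟨C * max c₁ c₂, mul_pos hC (lt_max_of_lt_left hc₁)⟩,
      hM.mul_mem_Hinf_vMc hC hmg hc₁.le hc₂.le hf hg⟩
  · refine mem_iInter.2 fun ⟨c, hc⟩ => ?_
    have hcC : 0 < c / C := div_pos hc hC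
    have hmem := hM.mul_mem_Hinf_vMc hC hmg hcC.le hcC.le
      (mem_iInter.1 hf ⟨c / C, hcC⟩) (mem_iInter.1 hg ⟨c / C, hcC⟩)
    rwa [max_self, mul_div_cancel₀ _ hC.ne'] at hmem

/-- Proposition: for a log-convex weight sequence `M` with (mg), there is
`H ≥ 1` with `f·g ∈ H^∞_{v_{M,H·max(c₁,c₂)}}` whenever `f ∈ H^∞_{v_{M,c₁}}`,
`g ∈ H^∞_{v_{M,c₂}}`; consequently the union and the intersection of the
spaces `H^∞_{v_{M,c}}` are closed under pointwise multiplication. -/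
theorem stmt17 (M : ℕ → ℝ) (hM : WeightSeq M) (hMlc : LogConvexSeq M)
    (hmg : MGseq M) :
    (∃ H : ℝ, 1 ≤ H ∧ ∀ c₁ c₂ : ℝ, 0 < c₁ → 0 < c₂ →
      ∀ f g : ℂ → ℂ, f ∈ Hinf (vMc M c₁) → g ∈ Hinf (vMc M c₂) →
        (fun z : ℂ => f z * g z) ∈ Hinf (vMc M (H * max c₁ c₂))) ∧
    (∀ f g : ℂ → ℂ,
      f ∈ ⋃ c : {c : ℝ // 0 < c}, Hinf (vMc M c.1) →
      g ∈ ⋃ c : {c : ℝ // 0 < c}, Hinf (vMc M c.1) →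
      (fun z : ℂ => f z * g z) ∈ ⋃ c : {c : ℝ // 0 < c}, Hinf (vMc M c.1)) ∧
    (∀ f g : ℂ → ℂ,
      f ∈ ⋂ c : {c : ℝ // 0 < c}, Hinf (vMc M c.1) →
      g ∈ ⋂ c : {c : ℝ // 0 < c}, Hinf (vMc M c.1) →
      (fun z : ℂ => f z * g z) ∈ ⋂ c : {c : ℝ // 0 < c}, Hinf (vMc M c.1)) :=
  stmt17_general M hM hmg
end
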